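/- In the symbolic message algebra, let i, kd, s be pairwise distinct natural numbers and let π := {aenc i (atom kd), senc (atom kd) (atom s)} (the recipient-protected delivery artifact: the delivery key kd encapsulated under the recipient public key of index i, and the exported secret s encrypted under kd). Then atom s ∉ analz π and atom kd ∉ analz π: without the recipient's private key atom i, the delivery artifact reveals neither the delivery key nor the exported secret. -/

import Mathlib

/-! The artifact `π` is already closed under the analysis rules: it contains no pair and no
signature, and opening either ciphertext needs an atom, while `π` contains none. Hence
`analz π = π`, and neither `atom s` nor `atom kd` belongs to `π`. -/

/-- Symbolic message algebra (Dolev–Yao model). -/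
inductive Msg where
  | atom : ℕ → Msg
  | pair : Msg → Msg → Msg
  | senc : Msg → Msg → Msg
  | aenc : ℕ → Msg → Msg
  | sig : Msg → Msg → Msg
deriving DecidableEq

/-- `Analz S m`: message `m` is extractable from the set `S` by projection,
symmetric decryption with a known key, asymmetric decryption with a known
private key, or reading the message out of a signature. -/
inductive Analz (S : Set Msg) : Msg → Prop
  | mem {m : Msg} : m ∈ S → Analz S m
  | fst {a b : Msg} : Analz S (Msg.pair a b) → Analz S a
  | snd {a b : Msg} : Analz S (Msg.pair a b) → Analz S b
  | sdec {k m : Msg} : Analz S (Msg.senc k m) → Analz S k → Analz S m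
  | adec {i : ℕ} {m : Msg} : Analz S (Msg.aenc i m) → Analz S (Msg.atom i) → Analz S m
  | sigMsg {k m : Msg} : Analz S (Msg.sig k m) → Analz S m

/-- `analz S` is the least superset of `S` closed under the analysis rules. -/
def analz (S : Set Msg) : Set Msg := {m | Analz S m}

/-- Recipient-protected export (symbolic core): without the recipient's private key
`atom i`, the delivery artifact — the delivery key `kd` encapsulated under the
recipient public key `i` together with the exported secret `s` sealed under `kd` —
reveals neither the exported secret nor the delivery key. -/
theorem recipient_protected_export
    (i kd s : ℕ) (hik : i ≠ kd) (his : i ≠ s) (hks : kd ≠ s) :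
    let π : Set Msg := {Msg.aenc i (Msg.atom kd), Msg.senc (Msg.atom kd) (Msg.atom s)}
    Msg.atom s ∉ analz π ∧ Msg.atom kd ∉ analz π := by
  intro π
  have key : ∀ m, Analz π m → m ∈ π := by
    intro m hm
    induction hm with
    | mem h => exact h
    | fst _ ih => simp [π] at ih
    | snd _ ih => simp [π] at ih
    | sigMsg _ ih => simp [π] at ih
    -- A decryption step needs an atomic key (`atom kd` or `atom i`) in `π`, which has no atoms.
    | sdec _ _ ih₁ ih₂ => simp_all [π]
    | adec _ _ _ ih₂ => simp [π] at ih₂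
  exact ⟨fun h => by simpa [π] using key _ h, fun h => by simpa [π] using key _ h⟩
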